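/- Let F be a finite field with q elements, let k, σ be positive integers with (k+2)·1_F ≠ 0 in F, and let 0 < ρ < 1/2. Define f(m,a) = a^{k+2} + Σ_{i=1}^k m_i a^i, Enc(m,x) = (m, x, f(m,x_1), …, f(m,x_σ)) ∈ F^{k+2σ}, and Dec(m', x', y_1, …, y_σ) = m' if y_j = f(m', x'_j) for all j ∈ [σ] and ⊥ otherwise. Then (Enc, Dec) is a strong (ρ, q^{ρ(k+2σ) − σ}·(k+1)^σ)-AMD code. -/

import Mathlib

/-!
An independent seed does not change the conditional min-entropy of the encoding randomness `R`,
so it may be treated as part of the leakage. A forgery then succeeds only when `R` lies in a set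
of at most `N` values determined by the leakage, hence with probability at most `N · 2 ^ (-H)`,
where `H ≥ log₂ #Rnd - ρ n log₂ q` is the conditional min-entropy of `R`.

For the polynomial code, an additive attack that changes the message from `m` to `m'`, the keys
`x j` by `d j` and the tags by `e j` succeeds only if `f(m, x j) + e j = f(m', x j + d j)` for
every `j`. The two sides are monic polynomials of degree `k + 2` in `x j`. They are distinct:
the coefficient of `X ^ (k + 1)` forces `(k + 2) d j = 0`, so `d j = 0`, and then comparing the
other coefficients gives `m = m'`. So each `x j` takes at most `k + 1` values, and
`N = (k + 1) ^ σ`.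
-/

open scoped Classical BigOperators

/-- Probability of an event `E` under a finitely supported probability mass function `p`. -/
noncomputable def pr {Ω : Type*} [Fintype Ω] (p : Ω → ℝ) (E : Ω → Prop) : ℝ :=
  ∑ ω : Ω, if E ω then p ω else 0

/-- Min-entropy `H∞(X) = -log₂ max_x Pr[X = x]`. -/
noncomputable def minEntropy {Ω α : Type*} [Fintype Ω] [Fintype α]
    (p : Ω → ℝ) (X : Ω → α) : ℝ :=
  - Real.logb 2 (⨆ x : α, pr p (fun ω => X ω = x))

/-- Conditional (average) min-entropy
`H̃∞(X|Z) = -log₂ Σ_z Pr[Z=z] · max_x Pr[X=x | Z=z] = -log₂ Σ_z max_x Pr[X=x ∧ Z=z]`. -/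
noncomputable def condMinEntropy {Ω α β : Type*} [Fintype Ω] [Fintype α] [Fintype β]
    (p : Ω → ℝ) (X : Ω → α) (Z : Ω → β) : ℝ :=
  - Real.logb 2 (∑ z : β, ⨆ x : α, pr p (fun ω => X ω = x ∧ Z ω = z))

/-- `(Enc, Dec)` (with message type `Msg`, randomness type `Rnd`, codeword type `C`,
codeword length `n` over an alphabet of size `q`) is a strong `(ρ, δ)`-AMD code:
for every message `m`, every probability space, every uniform randomness `R`, every
leakage `Z` (jointly distributed with `R`) satisfying
`H̃∞(Enc(m,R) | Z) ≥ H∞(Enc(m,R)) − ρ·n·log₂ q`, and every randomized adversary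
`A` whose internal random seed `W` is independent of `(R, Z)`,
`Pr[Dec(Enc(m,R) + A(Z)) ∉ {m, ⊥}] ≤ δ`. -/
def IsStrongAMD {Msg Rnd C : Type*} [Fintype Rnd] [Fintype C] [Add C]
    (Enc : Msg × Rnd → C) (Dec : C → Option Msg) (n q : ℕ) (ρ δ : ℝ) : Prop :=
  ∀ (m : Msg) (Ω : Type) [Fintype Ω] (p : Ω → ℝ),
    (∀ ω, 0 ≤ p ω) → (∑ ω : Ω, p ω) = 1 →
    ∀ (R : Ω → Rnd),
      (∀ r : Rnd, pr p (fun ω => R ω = r) = 1 / (Fintype.card Rnd : ℝ)) →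
      ∀ (ZS : Type) [Fintype ZS] (Z : Ω → ZS) (T : Type) [Fintype T] (W : Ω → T),
        (∀ (r : Rnd) (z : ZS) (w : T),
          pr p (fun ω => (R ω = r ∧ Z ω = z) ∧ W ω = w)
            = pr p (fun ω => R ω = r ∧ Z ω = z) * pr p (fun ω => W ω = w)) →
        condMinEntropy p (fun ω => Enc (m, R ω)) Z
          ≥ minEntropy p (fun ω => Enc (m, R ω)) - ρ * n * Real.logb 2 q →
        ∀ (A : ZS → T → C),
          pr p (fun ω => Dec (Enc (m, R ω) + A (Z ω) (W ω))
              ∉ ({some m, none} : Set (Option Msg))) ≤ δ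

section Probability

variable {Ω : Type*} [Fintype Ω] {p : Ω → ℝ}

lemma pr_nonneg (hp : ∀ ω, 0 ≤ p ω) (E : Ω → Prop) : 0 ≤ pr p E :=
  Finset.sum_nonneg fun ω _ => ite_nonneg (hp ω) le_rfl

lemma pr_eq_zero_of_forall_not {E : Ω → Prop} (h : ∀ ω, ¬E ω) : pr p E = 0 :=
  Finset.sum_eq_zero fun ω _ => if_neg (h ω)

lemma pr_mem_and_eq_sum {α : Type*} (X : Ω → α) (S : Finset α) (E : Ω → Prop) :
    pr p (fun ω => X ω ∈ S ∧ E ω) = ∑ x ∈ S, pr p (fun ω => X ω = x ∧ E ω) := by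
  unfold pr
  rw [Finset.sum_comm]
  refine Finset.sum_congr rfl fun ω _ => ?_
  by_cases hE : E ω <;> simp [hE]

lemma pr_le_sum (hp : ∀ ω, 0 ≤ p ω) (E : Ω → Prop) : pr p E ≤ ∑ ω, p ω := by
  refine Finset.sum_le_sum fun ω _ => ?_
  split_ifs
  exacts [le_rfl, hp ω]

variable {α β γ : Type*}

lemma sum_pr_and [Fintype β] (Y : Ω → β) (E : Ω → Prop) :
    ∑ y, pr p (fun ω => Y ω = y ∧ E ω) = pr p E := by
  simp [← pr_mem_and_eq_sum]

lemma sum_pr_eq [Fintype β] (Y : Ω → β) : ∑ y, pr p (fun ω => Y ω = y) = ∑ ω, p ω := by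
  simpa [pr] using sum_pr_and (p := p) Y (fun _ => True)

lemma pr_and_le_iSup (hp : ∀ ω, 0 ≤ p ω) (X : Ω → α) (E : Ω → Prop) (x : α) :
    pr p (fun ω => X ω = x ∧ E ω) ≤ ⨆ x, pr p (fun ω => X ω = x ∧ E ω) :=
  le_ciSup (f := fun x => pr p (fun ω => X ω = x ∧ E ω))
    ⟨∑ ω, p ω, Set.forall_mem_range.mpr fun _ => pr_le_sum hp _⟩ x

lemma iSup_pr_and_nonneg (hp : ∀ ω, 0 ≤ p ω) (X : Ω → α) (E : Ω → Prop) :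
    0 ≤ ⨆ x, pr p (fun ω => X ω = x ∧ E ω) :=
  Real.iSup_nonneg fun _ => pr_nonneg hp _

lemma iSup_pr_comp_and (hp : ∀ ω, 0 ≤ p ω) {g : α → γ} (hg : g.Injective)
    (X : Ω → α) (E : Ω → Prop) :
    ⨆ y, pr p (fun ω => g (X ω) = y ∧ E ω) = ⨆ x, pr p (fun ω => X ω = x ∧ E ω) := by
  refine le_antisymm (Real.iSup_le (fun y => ?_) (iSup_pr_and_nonneg hp X E))
    (Real.iSup_le (fun x => ?_) (iSup_pr_and_nonneg hp _ E))
  · by_cases hy : ∃ x, g x = y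
    · obtain ⟨x, rfl⟩ := hy
      simpa only [hg.eq_iff] using pr_and_le_iSup hp X E x
    · rw [pr_eq_zero_of_forall_not fun ω h => hy ⟨X ω, h.1⟩]
      exact iSup_pr_and_nonneg hp X E
  · simpa only [hg.eq_iff] using pr_and_le_iSup hp (fun ω => g (X ω)) E (g x)

lemma pr_mem_le_mul_sum_iSup [Fintype β] (hp : ∀ ω, 0 ≤ p ω) (X : Ω → α) (Z : Ω → β)
    {S : β → Finset α} {N : ℕ} (hS : ∀ z, (S z).card ≤ N) :
    pr p (fun ω => X ω ∈ S (Z ω)) ≤ N * ∑ z, ⨆ x, pr p (fun ω => X ω = x ∧ Z ω = z) := by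
  rw [← sum_pr_and Z, Finset.mul_sum]
  refine Finset.sum_le_sum fun z _ => ?_
  calc pr p (fun ω => Z ω = z ∧ X ω ∈ S (Z ω))
      = pr p (fun ω => X ω ∈ S z ∧ Z ω = z) := by
        congr! 2 with ω
        grind
    _ = ∑ x ∈ S z, pr p (fun ω => X ω = x ∧ Z ω = z) := pr_mem_and_eq_sum X (S z) _
    _ ≤ (S z).card * ⨆ x, pr p (fun ω => X ω = x ∧ Z ω = z) := by
        rw [← nsmul_eq_mul]
        exact Finset.sum_le_card_nsmul _ _ _ fun x _ => pr_and_le_iSup hp X _ x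
    _ ≤ N * ⨆ x, pr p (fun ω => X ω = x ∧ Z ω = z) := by
        gcongr
        exacts [iSup_pr_and_nonneg hp X _, hS z]

lemma sum_iSup_pr_and_pos [Fintype β] (hp : ∀ ω, 0 ≤ p ω) (hp1 : ∑ ω, p ω = 1)
    (X : Ω → α) (Z : Ω → β) :
    0 < ∑ z, ⨆ x, pr p (fun ω => X ω = x ∧ Z ω = z) := by
  have htotal : 1 ≤ (Finset.univ.image X).card * ∑ z, ⨆ x, pr p (fun ω => X ω = x ∧ Z ω = z) := by
    simpa [pr, hp1] using
      pr_mem_le_mul_sum_iSup hp X Z (S := fun _ => Finset.univ.image X) fun _ => le_rfl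
  exact pos_of_mul_pos_right (zero_lt_one.trans_le htotal) (Nat.cast_nonneg _)

variable [Fintype α] [Fintype β] [Fintype γ]

lemma minEntropy_comp_injective (hp : ∀ ω, 0 ≤ p ω) {g : α → γ} (hg : g.Injective)
    (X : Ω → α) : minEntropy p (fun ω => g (X ω)) = minEntropy p X := by
  simpa only [minEntropy, and_true] using
    congrArg (-Real.logb 2 ·) (iSup_pr_comp_and hp hg X fun _ => True)

lemma condMinEntropy_comp_injective (hp : ∀ ω, 0 ≤ p ω) {g : α → γ} (hg : g.Injective)
    (X : Ω → α) (Z : Ω → β) :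
    condMinEntropy p (fun ω => g (X ω)) Z = condMinEntropy p X Z := by
  simp only [condMinEntropy, iSup_pr_comp_and hp hg]

lemma minEntropy_of_uniform [Nonempty α] {X : Ω → α}
    (hX : ∀ x, pr p (fun ω => X ω = x) = 1 / (Fintype.card α : ℝ)) :
    minEntropy p X = Real.logb 2 (Fintype.card α) := by
  simp [minEntropy, hX, Real.logb_inv]

lemma condMinEntropy_prodMk_of_indep (hp : ∀ ω, 0 ≤ p ω) (hp1 : ∑ ω, p ω = 1)
    (X : Ω → α) (Z : Ω → β) (W : Ω → γ)
    (hindep : ∀ x z w, pr p (fun ω => (X ω = x ∧ Z ω = z) ∧ W ω = w)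
      = pr p (fun ω => X ω = x ∧ Z ω = z) * pr p (fun ω => W ω = w)) :
    condMinEntropy p X (fun ω => (Z ω, W ω)) = condMinEntropy p X Z := by
  have hfactor (z : β) (w : γ) :
      ⨆ x, pr p (fun ω => X ω = x ∧ (Z ω, W ω) = (z, w))
        = (⨆ x, pr p (fun ω => X ω = x ∧ Z ω = z)) * pr p (fun ω => W ω = w) := by
    simp only [Prod.mk.injEq, ← and_assoc, hindep, Real.iSup_mul_of_nonneg (pr_nonneg hp _)]
  simp only [condMinEntropy, Fintype.sum_prod_type, hfactor, ← Finset.mul_sum, sum_pr_eq, hp1,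
    mul_one]

lemma pr_mem_le_mul_rpow_neg_condMinEntropy (hp : ∀ ω, 0 ≤ p ω) (hp1 : ∑ ω, p ω = 1)
    (X : Ω → α) (Z : Ω → β) {S : β → Finset α} {N : ℕ} (hS : ∀ z, (S z).card ≤ N) :
    pr p (fun ω => X ω ∈ S (Z ω)) ≤ N * (2 : ℝ) ^ (-condMinEntropy p X Z) := by
  rw [condMinEntropy, neg_neg, Real.rpow_logb two_pos (by norm_num)
    (sum_iSup_pr_and_pos hp hp1 X Z)]
  exact pr_mem_le_mul_sum_iSup hp X Z hS

end Probability

theorem isStrongAMD_of_card_forgery_le {Msg Rnd C : Type*} [Fintype Rnd] [Fintype C] [Add C]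
    {Enc : Msg × Rnd → C} {Dec : C → Option Msg} {q N : ℕ} (n : ℕ) (ρ : ℝ) (hq : 0 < q)
    (hEnc : ∀ m, Function.Injective fun r => Enc (m, r))
    (hN : ∀ m a, (Finset.univ.filter fun r =>
      Dec (Enc (m, r) + a) ∉ ({some m, none} : Set (Option Msg))).card ≤ N) :
    IsStrongAMD Enc Dec n q ρ (N * ((q : ℝ) ^ (ρ * n) / Fintype.card Rnd)) := by
  intro m Ω _ p hp hp1 R hR ZS _ Z T _ W hindep hleak A
  obtain ⟨ω, -, -⟩ := Finset.exists_ne_zero_of_sum_ne_zero (hp1 ▸ one_ne_zero)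
  have : Nonempty Rnd := ⟨R ω⟩
  rw [minEntropy_comp_injective hp (hEnc m), condMinEntropy_comp_injective hp (hEnc m),
    minEntropy_of_uniform hR, ← condMinEntropy_prodMk_of_indep hp hp1 R Z W hindep] at hleak
  have hforge := pr_mem_le_mul_rpow_neg_condMinEntropy hp hp1 R (fun ω => (Z ω, W ω))
    (fun zw => hN m (A zw.1 zw.2))
  simp only [Finset.mem_filter, Finset.mem_univ, true_and] at hforge
  have hq' : (0 : ℝ) < q := by exact_mod_cast hq
  have hcard : (0 : ℝ) < Fintype.card Rnd := by exact_mod_cast Fintype.card_pos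
  calc _ ≤ _ := hforge
    _ ≤ N * (2 : ℝ) ^ (Real.logb 2 q * (ρ * n) - Real.logb 2 (Fintype.card Rnd)) := by
        gcongr
        · exact one_le_two
        · linarith
    _ = N * ((q : ℝ) ^ (ρ * n) / Fintype.card Rnd) := by
        rw [Real.rpow_sub two_pos, Real.rpow_mul two_pos.le,
          Real.rpow_logb two_pos (by norm_num) hq', Real.rpow_logb two_pos (by norm_num) hcard]

section TagCode

variable {M X Y ι : Type*}

/-- The systematic encoder that appends to a message `m` a key vector `x` and the tags
`f m (x j)` of `m` under each of the keys. -/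
def tagEncode (f : M → X → Y) (mx : M × (ι → X)) : M × (ι → X) × (ι → Y) :=
  (mx.1, mx.2, fun j => f mx.1 (mx.2 j))

/-- The decoder of `tagEncode f`, which outputs the message if all tags are correct and
`none` (the symbol `⊥`) otherwise. -/
noncomputable def tagDecode (f : M → X → Y) (c : M × (ι → X) × (ι → Y)) : Option M :=
  if ∀ j, c.2.2 j = f c.1 (c.2.1 j) then some c.1 else none

lemma tagEncode_injective (f : M → X → Y) : Function.Injective (tagEncode (ι := ι) f) := by
  rintro ⟨m, x⟩ ⟨m', x'⟩ h
  simp_all [tagEncode]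

lemma card_tagDecode_forgery_le [Fintype ι] [DecidableEq ι] [Add M] [Fintype X] [Add X] [Add Y]
    {f : M → X → Y} {N : ℕ}
    (hf : ∀ ⦃m m'⦄, m ≠ m' → ∀ d e,
      (Finset.univ.filter fun x => f m x + e = f m' (x + d)).card ≤ N)
    (m : M) (a : M × (ι → X) × (ι → Y)) :
    (Finset.univ.filter fun x : ι → X =>
      tagDecode f (tagEncode f (m, x) + a) ∉ ({some m, none} : Set (Option M))).card
      ≤ N ^ Fintype.card ι := by
  obtain ⟨dm, d, e⟩ := a
  by_cases hm : m = m + dm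
  · have hsafe (x : ι → X) : tagDecode f (tagEncode f (m, x) + (dm, d, e))
        ∈ ({some m, none} : Set (Option M)) := by
      simp only [tagDecode, tagEncode, Prod.mk_add_mk, ← hm]
      split_ifs <;> simp
    simp [hsafe]
  calc _ ≤ (Fintype.piFinset fun j =>
          Finset.univ.filter fun x => f m x + e j = f (m + dm) (x + d j)).card := by
        refine Finset.card_le_card fun x hx => ?_
        have haccept : tagDecode f (tagEncode f (m, x) + (dm, d, e)) ≠ none :=
          fun h => (Finset.mem_filter.mp hx).2 (Or.inr h)
        by_contra hx
        exact haccept (if_neg (by simpa [tagEncode] using hx))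
    _ = ∏ j, (Finset.univ.filter fun x => f m x + e j = f (m + dm) (x + d j)).card :=
        Fintype.card_piFinset _
    _ ≤ N ^ Fintype.card ι :=
        Finset.prod_le_pow_card _ _ _ fun j _ => hf hm (d j) (e j)

theorem isStrongAMD_tagCode [Fintype ι] [DecidableEq ι] [Fintype M] [Add M] [Fintype X] [Add X]
    [Fintype Y] [Add Y] {f : M → X → Y} {q N : ℕ} (n : ℕ) (ρ : ℝ) (hq : 0 < q)
    (hf : ∀ ⦃m m'⦄, m ≠ m' → ∀ d e,
      (Finset.univ.filter fun x => f m x + e = f m' (x + d)).card ≤ N) :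
    IsStrongAMD (tagEncode (ι := ι) f) (tagDecode f) n q ρ
      ((q : ℝ) ^ (ρ * n) * (N / Fintype.card X) ^ Fintype.card ι) := by
  have hcode := isStrongAMD_of_card_forgery_le n ρ hq
    (fun m => (tagEncode_injective f).comp (Prod.mk_right_injective m))
    (card_tagDecode_forgery_le (ι := ι) hf)
  convert hcode using 1
  rw [Fintype.card_fun]
  push_cast
  ring

end TagCode

section PolynomialTag

open Polynomial

/-- The tag `f(m, a)` of the message `m` under the key `a`; the entry `m i` of the 0-indexed
vector `m` is the coefficient of `a ^ (i + 1)`. -/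
def polynomialTag {R : Type*} [Semiring R] {k : ℕ} (m : Fin k → R) (a : R) : R :=
  a ^ (k + 2) + ∑ i : Fin k, m i * a ^ ((i : ℕ) + 1)

/-- The message-dependent part of `f(m, X)`, as a polynomial. -/
noncomputable def messagePolynomial {R : Type*} [Semiring R] {k : ℕ} (m : Fin k → R) : R[X] :=
  ∑ i : Fin k, C (m i) * X ^ ((i : ℕ) + 1)

section Semiring

variable {R : Type*} [Semiring R] {k : ℕ}

lemma coeff_messagePolynomial_succ (m : Fin k → R) (i : Fin k) :
    (messagePolynomial m).coeff (i + 1) = m i := by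
  simp [messagePolynomial, Fin.val_inj, coeff_X_pow]

lemma natDegree_messagePolynomial_le (m : Fin k → R) : (messagePolynomial m).natDegree ≤ k :=
  natDegree_sum_le_of_forall_le _ _ fun i _ => (natDegree_C_mul_X_pow_le _ _).trans i.isLt

lemma eq_of_messagePolynomial_eq_add_C {m m' : Fin k → R} {e : R}
    (h : messagePolynomial m' = messagePolynomial m + C e) : m' = m := by
  funext i
  simpa [coeff_messagePolynomial_succ, coeff_C] using congrArg (coeff · (i + 1)) h

end Semiring

lemma eval_X_pow_add_messagePolynomial {R : Type*} [CommSemiring R] {k : ℕ} (m : Fin k → R)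
    (x : R) : (X ^ (k + 2) + messagePolynomial m).eval x = polynomialTag m x := by
  simp [messagePolynomial, polynomialTag, eval_finsetSum]

lemma eq_of_taylor_X_pow_add_eq {R : Type*} [CommRing R] [NoZeroDivisors R] {k : ℕ}
    {p p' : R[X]} {d : R} (hk : ((k + 2 : ℕ) : R) ≠ 0)
    (hp : p.natDegree ≤ k) (hp' : p'.natDegree ≤ k)
    (h : taylor d (X ^ (k + 2) + p') = X ^ (k + 2) + p) : p' = p := by
  have hd : d = 0 := by
    have hcoeff := congrArg (coeff · (k + 1)) h
    have hlt : k < k + 1 := k.lt_succ_self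
    simp only [map_add, taylor_X_pow, coeff_add, coeff_X_add_C_pow, coeff_X_pow] at hcoeff
    rw [coeff_eq_zero_of_natDegree_lt (hp.trans_lt hlt),
      coeff_eq_zero_of_natDegree_lt (((natDegree_taylor p' d).trans_le hp').trans_lt hlt)]
      at hcoeff
    have hprod : d * ((k + 2 : ℕ) : R) = 0 := by
      simpa [Nat.choose_succ_self_right, add_assoc, one_add_one_eq_two] using hcoeff
    exact (mul_eq_zero.mp hprod).resolve_right hk
  simpa [hd] using h

variable {R : Type*} [CommRing R] [IsDomain R] {k : ℕ}

lemma card_eval_eq_lt_of_monic {P Q : R[X]} {n : ℕ} (hP : P.Monic) (hQ : Q.Monic)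
    (hPn : P.natDegree = n) (hQn : Q.natDegree = n) (hne : P ≠ Q) (s : Finset R) :
    (s.filter fun x => P.eval x = Q.eval x).card < n := by
  by_contra! hcard
  refine hne (eq_of_degree_le_of_eval_finset_eq
    (s.filter fun x => P.eval x = Q.eval x) ?_ ?_ (hP.trans hQ.symm) ?_)
  · exact natDegree_le_iff_degree_le.mp (hPn.trans_le hcard)
  · rw [degree_eq_natDegree hP.ne_zero, degree_eq_natDegree hQ.ne_zero, hPn, hQn]
  · simp

lemma card_eval_X_pow_add_eq_eval_shift_le {p p' : R[X]}
    (hk : ((k + 2 : ℕ) : R) ≠ 0) (hp : p.natDegree ≤ k) (hp' : p'.natDegree ≤ k) (hne : p' ≠ p)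
    (d : R) (s : Finset R) :
    (s.filter fun x =>
      (X ^ (k + 2) + p).eval x = (X ^ (k + 2) + p').eval (x + d)).card ≤ k + 1 := by
  have hmonic {P : R[X]} (hP : P.natDegree ≤ k) : (X ^ (k + 2) + P).Monic :=
    monic_X_pow_add ((degree_le_of_natDegree_le hP).trans_lt (by norm_cast; omega))
  have hdeg {P : R[X]} (hP : P.natDegree ≤ k) : (X ^ (k + 2) + P).natDegree = k + 2 := by
    rw [natDegree_add_eq_left_of_natDegree_lt] <;> rw [natDegree_X_pow]
    omega
  have hlt := card_eval_eq_lt_of_monic (hmonic hp)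
    ((leadingCoeff_taylor d _).trans (hmonic hp')) (hdeg hp)
    ((natDegree_taylor _ d).trans (hdeg hp'))
    (fun h => hne (eq_of_taylor_X_pow_add_eq hk hp hp' h.symm)) s
  simpa only [taylor_eval, Nat.lt_succ_iff] using hlt

lemma card_polynomialTag_collision_le (hk : ((k + 2 : ℕ) : R) ≠ 0)
    {m m' : Fin k → R} (hm : m ≠ m') (d e : R) (s : Finset R) :
    (s.filter fun x => polynomialTag m x + e = polynomialTag m' (x + d)).card ≤ k + 1 := by
  have hbound := card_eval_X_pow_add_eq_eval_shift_le hk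
    (natDegree_add_C.trans_le (natDegree_messagePolynomial_le m))
    (natDegree_messagePolynomial_le m')
    (fun h => hm (eq_of_messagePolynomial_eq_add_C (e := e) h).symm) d s
  simpa only [← add_assoc, eval_add (q := C e), eval_C, eval_X_pow_add_messagePolynomial]
    using hbound

end PolynomialTag

/-- the coding scheme `Enc(m,x) = (m, x, f(m,x_1), …, f(m,x_σ))` with
`f(m,a) = a^{k+2} + Σ_{i=1}^k m_i a^i` and the natural decoder is a strong
`(ρ, q^{ρ(k+2σ) − σ}·(k+1)^σ)`-AMD code for any `0 < ρ < 1/2`. -/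
theorem stmt9 {F : Type*} [Field F] [Fintype F] (k σn : ℕ)
    (hk : 0 < k) (hσ : 0 < σn) (hchar : ((k + 2 : ℕ) : F) ≠ 0)
    (ρ : ℝ) (hρ0 : 0 < ρ) (hρ1 : ρ < 1 / 2) :
    IsStrongAMD
      (fun mx : (Fin k → F) × (Fin σn → F) =>
        ((mx.1, mx.2, fun j => (mx.2 j) ^ (k + 2)
            + ∑ i : Fin k, mx.1 i * (mx.2 j) ^ ((i : ℕ) + 1))
          : (Fin k → F) × (Fin σn → F) × (Fin σn → F)))
      (fun c : (Fin k → F) × (Fin σn → F) × (Fin σn → F) =>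
        if ∀ j, c.2.2 j = (c.2.1 j) ^ (k + 2)
            + ∑ i : Fin k, c.1 i * (c.2.1 j) ^ ((i : ℕ) + 1)
        then some c.1 else none)
      (k + 2 * σn) (Fintype.card F)
      ρ ((Fintype.card F : ℝ) ^ (ρ * ((k : ℝ) + 2 * σn) - σn) * ((k : ℝ) + 1) ^ σn) := by
  have hcode := isStrongAMD_tagCode (ι := Fin σn) (k + 2 * σn) ρ (Fintype.card_pos (α := F))
    fun _ _ hm d e => card_polynomialTag_collision_le hchar hm d e Finset.univ
  convert hcode using 1
  · rfl
  · funext c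
    simp only [tagDecode, polynomialTag]
    congr
  · rw [Real.rpow_sub (by exact_mod_cast Fintype.card_pos), Real.rpow_natCast, Fintype.card_fin,
      div_pow, div_mul_eq_mul_div, mul_div_assoc]
    push_cast
    rfl
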